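/- Let $(\mathfrak{g}, r, \psi)$ be a Lie algebra with a twisted triangular $r$-matrix structure. Then the kernel of $r^\sharp : \mathfrak{g}^* \to \mathfrak{g}$ is an abelian ideal of the Lie algebra $(\mathfrak{g}^*, [\cdot,\cdot]_{r,\psi})$. -/

import Mathlib

/-- The bracket `[α,β]_{r,ψ} = ad*_{r^♯α}(β) - ad*_{r^♯β}(α) + ψ(r^♯α, r^♯β, ·)`
on the dual of a Lie algebra `g`, where `r^♯` is the map induced by `r ∈ ∧²g` and
`ψ` is a trilinear form (a 3-cochain of `g`), written here in curried form. -/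
noncomputable def twBracket {g : Type*} [LieRing g] [LieAlgebra ℝ g]
    (rsharp : Module.Dual ℝ g →ₗ[ℝ] g)
    (ψ : g →ₗ[ℝ] g →ₗ[ℝ] Module.Dual ℝ g)
    (α β : Module.Dual ℝ g) : Module.Dual ℝ g :=
  ψ (rsharp α) (rsharp β)
    - β ∘ₗ (LieAlgebra.ad ℝ g (rsharp α))
    + α ∘ₗ (LieAlgebra.ad ℝ g (rsharp β))

/-!
The twisted classical Yang–Baxter equation, paired with a third covector, says exactly that `r^♯`
carries `[·,·]_{r,ψ}` to the bracket of `g`; its kernel is therefore an ideal. All three terms of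
`[α,β]_{r,ψ}` contain `r^♯ α` or `r^♯ β`, so the bracket vanishes on the kernel.
-/

section TwBracket

variable {g : Type*} [LieRing g] [LieAlgebra ℝ g]
  (rsharp : Module.Dual ℝ g →ₗ[ℝ] g) (ψ : g →ₗ[ℝ] g →ₗ[ℝ] Module.Dual ℝ g)

theorem twBracket_apply (α β : Module.Dual ℝ g) (X : g) :
    twBracket rsharp ψ α β X =
      ψ (rsharp α) (rsharp β) X - β ⁅rsharp α, X⁆ + α ⁅rsharp β, X⁆ :=
  rfl

variable {rsharp}

theorem twBracket_eq_zero_of_map_eq_zero {γ δ : Module.Dual ℝ g}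
    (hγ : rsharp γ = 0) (hδ : rsharp δ = 0) : twBracket rsharp ψ γ δ = 0 := by
  ext X
  simp [twBracket_apply, hγ, hδ]

variable {ψ}

theorem map_twBracket
    (hskew : ∀ α β : Module.Dual ℝ g, β (rsharp α) = - α (rsharp β))
    (hcybe : ∀ α β γ : Module.Dual ℝ g,
      γ ⁅rsharp α, rsharp β⁆ + α ⁅rsharp β, rsharp γ⁆ + β ⁅rsharp γ, rsharp α⁆
        = - ψ (rsharp α) (rsharp β) (rsharp γ))
    (α β : Module.Dual ℝ g) :
    rsharp (twBracket rsharp ψ α β) = ⁅rsharp α, rsharp β⁆ := by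
  refine Module.eval_apply_injective ℝ (LinearMap.ext fun γ => ?_)
  have hβ : β ⁅rsharp γ, rsharp α⁆ = -β ⁅rsharp α, rsharp γ⁆ := by
    rw [← lie_skew, map_neg]
  calc γ (rsharp (twBracket rsharp ψ α β))
      = -twBracket rsharp ψ α β (rsharp γ) := hskew _ _
    _ = -ψ (rsharp α) (rsharp β) (rsharp γ) + β ⁅rsharp α, rsharp γ⁆
          - α ⁅rsharp β, rsharp γ⁆ := by rw [twBracket_apply]; ring
    _ = γ ⁅rsharp α, rsharp β⁆ := by rw [← hcybe, hβ]; ring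

theorem statement2_general
    (hskew : ∀ α β : Module.Dual ℝ g, β (rsharp α) = - α (rsharp β))
    (hcybe : ∀ α β γ : Module.Dual ℝ g,
      γ ⁅rsharp α, rsharp β⁆ + α ⁅rsharp β, rsharp γ⁆ + β ⁅rsharp γ, rsharp α⁆
        = - ψ (rsharp α) (rsharp β) (rsharp γ)) :
    (∀ γ δ : Module.Dual ℝ g, rsharp γ = 0 → rsharp δ = 0 →
        twBracket rsharp ψ γ δ = 0) ∧
    (∀ α γ : Module.Dual ℝ g, rsharp γ = 0 →
        rsharp (twBracket rsharp ψ α γ) = 0 ∧ rsharp (twBracket rsharp ψ γ α) = 0) := by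
  refine ⟨fun γ δ => twBracket_eq_zero_of_map_eq_zero ψ, fun α γ hγ => ⟨?_, ?_⟩⟩
  · rw [map_twBracket hskew hcybe, hγ, lie_zero]
  · rw [map_twBracket hskew hcybe, hγ, zero_lie]

end TwBracket

/-- the kernel of `r^♯` is an abelian ideal of `(g*, [·,·]_{r,ψ})`. -/
theorem statement2 (g : Type*) [LieRing g] [LieAlgebra ℝ g] [FiniteDimensional ℝ g]
    (rsharp : Module.Dual ℝ g →ₗ[ℝ] g)
    (hskew : ∀ α β : Module.Dual ℝ g, β (rsharp α) = - α (rsharp β))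
    (ψ : g →ₗ[ℝ] g →ₗ[ℝ] Module.Dual ℝ g)
    (halt1 : ∀ X Y : g, ψ X X Y = 0)
    (halt2 : ∀ X Y : g, ψ X Y Y = 0)
    (hcocycle : ∀ X Y Z W : g,
      ψ ⁅X, Y⁆ Z W - ψ ⁅X, Z⁆ Y W + ψ ⁅X, W⁆ Y Z
        + ψ ⁅Y, Z⁆ X W - ψ ⁅Y, W⁆ X Z + ψ ⁅Z, W⁆ X Y = 0)
    (hcybe : ∀ α β γ : Module.Dual ℝ g,
      γ ⁅rsharp α, rsharp β⁆ + α ⁅rsharp β, rsharp γ⁆ + β ⁅rsharp γ, rsharp α⁆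
        = - ψ (rsharp α) (rsharp β) (rsharp γ)) :
    (∀ γ δ : Module.Dual ℝ g, rsharp γ = 0 → rsharp δ = 0 →
        twBracket rsharp ψ γ δ = 0) ∧
    (∀ α γ : Module.Dual ℝ g, rsharp γ = 0 →
        rsharp (twBracket rsharp ψ α γ) = 0) :=
  have ⟨habelian, hideal⟩ := statement2_general hskew hcybe
  ⟨habelian, fun α γ hγ => (hideal α γ hγ).1⟩
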